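/- Let N ≥ 1 and i ∈ {1,…,N} be integers and let μ_1,…,μ_N be real numbers. Then the following two conditions are equivalent: (a) for every λ = (λ_1,…,λ_N) ∈ ℝ^N with λ_k ≥ 0 for all k ∈ {1,…,N}, one has Σ_{j=1}^N μ_j · S_{i−1}(λ̂_j) ≥ 0; (b) for every subset J ⊆ {1,…,N} with |J| = N − i + 1, one has Σ_{j∈J} μ_j ≥ 0. -/

import Mathlib

/-!
Exchanging the order of summation, `∑ⱼ μⱼ S_m(λ̂ⱼ) = ∑_{|I| = m} (∑_{j ∉ I} μⱼ) ∏_{l ∈ I} λₗ`,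
which is a polynomial in `λ` with square-free monomials. If its coefficients are nonnegative, so are
its values at `λ ≥ 0`; conversely, its value at the indicator vector of an `m`-set `I` is the single
coefficient `∑_{j ∉ I} μⱼ`.
-/

open Finset

section

variable {ι R : Type*} [DecidableEq ι]

theorem sum_mul_sum_powersetCard_erase [NonUnitalNonAssocSemiring R] (s : Finset ι) (m : ℕ)
    (μ : ι → R) (f : Finset ι → R) :
    ∑ j ∈ s, μ j * ∑ I ∈ (s.erase j).powersetCard m, f I =
      ∑ I ∈ s.powersetCard m, (∑ j ∈ s \ I, μ j) * f I := by
  simp_rw [mul_sum, sum_mul]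
  refine sum_comm' fun j I => ?_
  simp only [mem_powersetCard, subset_erase, mem_sdiff]
  tauto

theorem sum_powersetCard_mul_prod_boole [CommSemiring R] (s t : Finset ι) (m : ℕ)
    (c : Finset ι → R) :
    ∑ I ∈ s.powersetCard m, c I * ∏ l ∈ I, (if l ∈ t then 1 else 0) =
      ∑ I ∈ (s ∩ t).powersetCard m, c I := by
  have filter_eq : (s.powersetCard m).filter (· ⊆ t) = (s ∩ t).powersetCard m := by
    ext I
    simp only [mem_filter, mem_powersetCard, subset_inter_iff, and_right_comm]
  simp_rw [prod_boole, mul_ite, mul_one, mul_zero, ← subset_iff, ← sum_filter, filter_eq]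

theorem stmt_0_general [CommSemiring R] [PartialOrder R] [IsOrderedRing R] (s : Finset ι) (m : ℕ)
    (μ : ι → R) :
    (∀ lam : ι → R, (∀ k, 0 ≤ lam k) →
      0 ≤ ∑ j ∈ s, μ j * ∑ I ∈ (s.erase j).powersetCard m, ∏ l ∈ I, lam l) ↔
    ∀ J ⊆ s, #J + m = #s → 0 ≤ ∑ j ∈ J, μ j := by
  simp_rw [sum_mul_sum_powersetCard_erase]
  constructor
  · intro nonneg J hJs hJ
    have card_sdiff_J : #(s \ J) = m := by
      rw [card_sdiff_of_subset hJs]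
      omega
    have nonneg_at_indicator := nonneg (fun l => if l ∈ s \ J then 1 else 0) fun l => by
      split_ifs <;> simp
    rwa [sum_powersetCard_mul_prod_boole, inter_eq_right.mpr sdiff_subset, ← card_sdiff_J,
      powersetCard_self, sum_singleton, Finset.sdiff_sdiff_eq_self hJs] at nonneg_at_indicator
  · intro nonneg lam hlam
    refine sum_nonneg fun I hI => mul_nonneg ?_ (prod_nonneg fun l _ => hlam l)
    obtain ⟨hIs, rfl⟩ := mem_powersetCard.mp hI
    exact nonneg _ sdiff_subset (card_sdiff_add_card_eq_card hIs)

end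

/-- For `μ : Fin N → ℝ` and `1 ≤ i ≤ N`, the condition
`∀ λ ≥ 0, Σ_j μ_j · S_{i−1}(λ̂_j) ≥ 0` is equivalent to
`Σ_{j∈J} μ_j ≥ 0` for every `J ⊆ {1,…,N}` with `|J| = N − i + 1`.
Here `S_{i−1}(λ̂_j)` is the `(i−1)`-st elementary symmetric function of the numbers
`λ_1,…,λ_N` with `λ_j` deleted. -/
theorem stmt_0 (N i : ℕ) (hN : 1 ≤ N) (hi : 1 ≤ i) (hiN : i ≤ N) (μ : Fin N → ℝ) :
    (∀ lam : Fin N → ℝ, (∀ k, 0 ≤ lam k) →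
      0 ≤ ∑ j : Fin N, μ j *
        ∑ I ∈ (Finset.univ.erase j).powersetCard (i - 1), ∏ l ∈ I, lam l) ↔
    (∀ J : Finset (Fin N), J.card = N - i + 1 → 0 ≤ ∑ j ∈ J, μ j) := by
  have card_iff (k : ℕ) : k + (i - 1) = N ↔ k = N - i + 1 := by omega
  simp [stmt_0_general, card_iff]
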